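/- Every group G has an amenable radical: the subgroup generated by all normal amenable subgroups of G is itself a normal amenable subgroup of G, and hence is the unique maximal normal amenable subgroup of G, containing every normal amenable subgroup. -/

import Mathlib

/-!
If `G` acts on `X` and `N` is an amenable subgroup of `G`, averaging the translates of a mean on `X`
against an invariant mean on `N` gives an `N`-invariant mean on `X`. The averaged mean keeps any
invariance the first mean had under a subgroup `M` normalized by `N`, because
`h * n = n * (n⁻¹ * h * n)`. So finitely many normal amenable subgroups have a common invariant mean
on `X`, and by compactness so does any family of them. The stabilizer of a mean being a subgroup,
this mean is invariant under the subgroup generated by the family. Taking `X = G` and pushing the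
mean forward along an equivariant retraction of `G` onto this subgroup shows that it is amenable.
-/

/-- A group is amenable if there is a left-invariant mean on its
bounded real-valued functions. -/
def IsAmenable (G : Type*) [Group G] : Prop :=
  ∃ m : (G → ℝ) → ℝ,
    (∀ f₁ f₂ : G → ℝ, (∃ C, ∀ x, |f₁ x| ≤ C) → (∃ C, ∀ x, |f₂ x| ≤ C) →
      m (f₁ + f₂) = m f₁ + m f₂) ∧
    (∀ (c : ℝ) (f : G → ℝ), (∃ C, ∀ x, |f x| ≤ C) → m (c • f) = c * m f) ∧
    (∀ f : G → ℝ, (∃ C, ∀ x, |f x| ≤ C) → (∀ x, 0 ≤ f x) → 0 ≤ m f) ∧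
    m (fun _ => 1) = 1 ∧
    (∀ (g : G) (f : G → ℝ), (∃ C, ∀ x, |f x| ≤ C) →
      m (fun x => f (g * x)) = m f)

/-- The subgroup of `G` generated by all normal amenable subgroups of `G`. -/
def amenableRadical (G : Type*) [Group G] : Subgroup G :=
  Subgroup.closure {g : G | ∃ N : Subgroup G, N.Normal ∧ IsAmenable N ∧ g ∈ N}

open Filter Topology

section Mean

variable {X Y ι : Type*}

/-- Boundedness of a real-valued function, in the form in which it occurs in `IsAmenable`. -/
def IsBoundedFun (f : X → ℝ) : Prop :=
  ∃ C, ∀ x, |f x| ≤ C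

theorem IsBoundedFun.add {f g : X → ℝ} (hf : IsBoundedFun f) (hg : IsBoundedFun g) :
    IsBoundedFun (f + g) := by
  obtain ⟨C, hC⟩ := hf
  obtain ⟨D, hD⟩ := hg
  exact ⟨C + D, fun x => (abs_add_le _ _).trans (add_le_add (hC x) (hD x))⟩

theorem IsBoundedFun.smul {f : X → ℝ} (c : ℝ) (hf : IsBoundedFun f) : IsBoundedFun (c • f) := by
  obtain ⟨C, hC⟩ := hf
  refine ⟨|c| * C, fun x => ?_⟩
  rw [Pi.smul_apply, smul_eq_mul, abs_mul]
  exact mul_le_mul_of_nonneg_left (hC x) (abs_nonneg c)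

theorem IsBoundedFun.comp {f : X → ℝ} (hf : IsBoundedFun f) (r : Y → X) :
    IsBoundedFun fun y => f (r y) :=
  hf.imp fun _ hC y => hC (r y)

theorem isBoundedFun_one : IsBoundedFun fun _ : X => (1 : ℝ) :=
  ⟨1, fun _ => abs_one.le⟩

/-- A mean on the bounded real-valued functions on `X`. It is encoded, as in `IsAmenable`, as a
functional on all real-valued functions whose values at unbounded functions are arbitrary. -/
structure IsMean (m : (X → ℝ) → ℝ) : Prop where
  map_add : ∀ f₁ f₂ : X → ℝ, IsBoundedFun f₁ → IsBoundedFun f₂ → m (f₁ + f₂) = m f₁ + m f₂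
  map_smul : ∀ (c : ℝ) (f : X → ℝ), IsBoundedFun f → m (c • f) = c * m f
  map_nonneg : ∀ f : X → ℝ, IsBoundedFun f → (∀ x, 0 ≤ f x) → 0 ≤ m f
  map_one : m (fun _ => 1) = 1

variable {m : (X → ℝ) → ℝ}

theorem isMean_eval (x : X) : IsMean fun f : X → ℝ => f x where
  map_add _ _ _ _ := rfl
  map_smul _ _ _ := rfl
  map_nonneg _ _ h := h x
  map_one := rfl

theorem IsMean.map_le (hm : IsMean m) {f : X → ℝ} (hf : IsBoundedFun f) {C : ℝ}
    (hC : ∀ x, f x ≤ C) : m f ≤ C := by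
  have hpos : 0 ≤ m (C • (fun _ => 1) + (-1 : ℝ) • f) :=
    hm.map_nonneg _ ((isBoundedFun_one.smul C).add (hf.smul (-1))) fun x => by simpa using hC x
  rw [hm.map_add _ _ (isBoundedFun_one.smul C) (hf.smul (-1)), hm.map_smul _ _ isBoundedFun_one,
    hm.map_smul _ _ hf, hm.map_one] at hpos
  linarith

theorem IsMean.abs_map_le (hm : IsMean m) {f : X → ℝ} {C : ℝ} (hC : ∀ x, |f x| ≤ C) :
    |m f| ≤ C := by
  have hf : IsBoundedFun f := ⟨C, hC⟩
  refine abs_le'.2 ⟨hm.map_le hf fun x => (abs_le'.1 (hC x)).1, ?_⟩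
  rw [← neg_one_mul, ← hm.map_smul _ _ hf]
  exact hm.map_le (hf.smul (-1)) fun x => by simpa using (abs_le'.1 (hC x)).2

theorem IsMean.comp (hm : IsMean m) (r : X → Y) :
    IsMean fun f : Y → ℝ => m fun x => f (r x) where
  map_add _ _ h₁ h₂ := hm.map_add _ _ (h₁.comp r) (h₂.comp r)
  map_smul c _ hf := hm.map_smul c _ (hf.comp r)
  map_nonneg _ hf h := hm.map_nonneg _ (hf.comp r) fun x => h (r x)
  map_one := hm.map_one

theorem IsMean.of_tendsto {l : Filter ι} [l.NeBot] {u : ι → (X → ℝ) → ℝ}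
    (hu : ∀ i, IsMean (u i))
    (hlim : ∀ f, IsBoundedFun f → Tendsto (fun i => u i f) l (𝓝 (m f))) : IsMean m where
  map_add f₁ f₂ h₁ h₂ := tendsto_nhds_unique (hlim _ (h₁.add h₂)) <|
    ((hlim _ h₁).add (hlim _ h₂)).congr fun i => ((hu i).map_add f₁ f₂ h₁ h₂).symm
  map_smul c f hf := tendsto_nhds_unique (hlim _ (hf.smul c)) <|
    ((hlim _ hf).const_mul c).congr fun i => ((hu i).map_smul c f hf).symm
  map_nonneg f hf h := ge_of_tendsto' (hlim f hf) fun i => (hu i).map_nonneg f hf h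
  map_one := tendsto_nhds_unique (hlim _ isBoundedFun_one) <|
    tendsto_const_nhds.congr fun i => (hu i).map_one.symm

theorem exists_isMean_tendsto (U : Ultrafilter ι) {u : ι → (X → ℝ) → ℝ}
    (hu : ∀ i, IsMean (u i)) :
    ∃ m : (X → ℝ) → ℝ, IsMean m ∧
      ∀ f, IsBoundedFun f → Tendsto (fun i => u i f) U (𝓝 (m f)) := by
  have hlim (f : X → ℝ) (hf : IsBoundedFun f) :
      Tendsto (fun i => u i f) U (𝓝 (limUnder U fun i => u i f)) := by
    obtain ⟨C, hC⟩ := hf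
    have hmem : ∀ i, u i f ∈ Set.Icc (-C) C := fun i => abs_le.1 ((hu i).abs_map_le hC)
    obtain ⟨a, -, ha⟩ := isCompact_Icc.ultrafilter_le_nhds (U.map fun i => u i f)
      (tendsto_principal.2 (Eventually.of_forall hmem))
    exact tendsto_nhds_limUnder ⟨a, ha⟩
  exact ⟨_, IsMean.of_tendsto hu hlim, hlim⟩

end Mean

section Action

variable {G X ι : Type*} [Group G] [MulAction G X]

/-- The stabilizer in `G` of a functional on the bounded functions on `X`. Invariance is required on
bounded functions only, since a mean is arbitrary elsewhere. -/
def meanStabilizer (G : Type*) {X : Type*} [Group G] [MulAction G X] (m : (X → ℝ) → ℝ) :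
    Subgroup G where
  carrier := {g | ∀ f, IsBoundedFun f → m (fun x => f (g • x)) = m f}
  one_mem' f _ := by simp only [one_smul]
  mul_mem' {a b} ha hb f hf := by
    simp only [mul_smul]
    exact (hb _ (hf.comp (a • ·))).trans (ha f hf)
  inv_mem' {a} ha f hf := by
    simpa only [inv_smul_smul] using (ha _ (hf.comp (a⁻¹ • ·))).symm

theorem isAmenable_iff_exists_isMean :
    IsAmenable G ↔ ∃ m : (G → ℝ) → ℝ, IsMean m ∧ meanStabilizer G m = ⊤ := by
  constructor
  · rintro ⟨m, hadd, hsmul, hnonneg, hone, hinv⟩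
    exact ⟨m, ⟨hadd, hsmul, hnonneg, hone⟩, eq_top_iff.2 fun g _ => hinv g⟩
  · rintro ⟨m, ⟨hadd, hsmul, hnonneg, hone⟩, hinv⟩
    exact ⟨m, hadd, hsmul, hnonneg, hone, fun g => eq_top_iff.1 hinv (Subgroup.mem_top g)⟩

theorem mem_meanStabilizer_of_tendsto {l : Filter ι} [l.NeBot] {u : ι → (X → ℝ) → ℝ}
    {m : (X → ℝ) → ℝ} (hlim : ∀ f, IsBoundedFun f → Tendsto (fun i => u i f) l (𝓝 (m f))) {g : G}
    (hg : ∀ᶠ i in l, g ∈ meanStabilizer G (u i)) : g ∈ meanStabilizer G m := fun f hf =>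
  tendsto_nhds_unique (hlim _ (hf.comp (g • ·))) <|
    (hlim f hf).congr' <| hg.mono fun _ hi => (hi f hf).symm

/-- The convolution of a functional `μ` on functions on `K` with a functional `m` on functions on a
`K`-space `X`: the average of the translates of `m` with respect to `μ`. -/
def meanConvolution {K X : Type*} [SMul K X] (μ : (K → ℝ) → ℝ) (m : (X → ℝ) → ℝ) :
    (X → ℝ) → ℝ :=
  fun f => μ fun k => m fun x => f (k • x)

theorem IsMean.isBoundedFun_translates {K X : Type*} [SMul K X] {m : (X → ℝ) → ℝ} (hm : IsMean m)
    {f : X → ℝ} (hf : IsBoundedFun f) : IsBoundedFun fun k : K => m fun x => f (k • x) :=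
  hf.imp fun _ hC k => hm.abs_map_le fun x => hC (k • x)

theorem IsMean.convolution {K X : Type*} [SMul K X] {μ : (K → ℝ) → ℝ} {m : (X → ℝ) → ℝ}
    (hμ : IsMean μ) (hm : IsMean m) : IsMean (meanConvolution μ m) where
  map_add f₁ f₂ h₁ h₂ := by
    have hsum : (fun k : K => m fun x => (f₁ + f₂) (k • x)) =
        (fun k => m fun x => f₁ (k • x)) + fun k => m fun x => f₂ (k • x) :=
      funext fun k => (hm.comp (k • ·)).map_add f₁ f₂ h₁ h₂
    simp only [meanConvolution, hsum]
    exact hμ.map_add _ _ (hm.isBoundedFun_translates h₁) (hm.isBoundedFun_translates h₂)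
  map_smul c f hf := by
    have hsmul : (fun k : K => m fun x => (c • f) (k • x)) = c • fun k => m fun x => f (k • x) :=
      funext fun k => (hm.comp (k • ·)).map_smul c f hf
    simp only [meanConvolution, hsmul]
    exact hμ.map_smul c _ (hm.isBoundedFun_translates hf)
  map_nonneg f hf h := hμ.map_nonneg _ (hm.isBoundedFun_translates hf) fun k =>
    (hm.comp (k • ·)).map_nonneg f hf h
  map_one := by simp only [meanConvolution, hm.map_one, hμ.map_one]

theorem meanStabilizer_le_meanStabilizer_meanConvolution (μ : (G → ℝ) → ℝ) {m : (X → ℝ) → ℝ}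
    (hm : IsMean m) : meanStabilizer G μ ≤ meanStabilizer G (meanConvolution μ m) := by
  intro g hg f hf
  simpa only [meanConvolution, smul_eq_mul, mul_smul] using hg _ (hm.isBoundedFun_translates hf)

theorem le_meanStabilizer_meanConvolution_of_le_normalizer {M N : Subgroup G}
    (hNM : N ≤ Subgroup.normalizer (M : Set G)) (μ : (N → ℝ) → ℝ) {m : (X → ℝ) → ℝ}
    (hM : M ≤ meanStabilizer G m) : M ≤ meanStabilizer G (meanConvolution μ m) := by
  refine fun h hh f hf => congrArg μ (funext fun n => ?_)
  have hconj : (n : G)⁻¹ * h * n ∈ M := (Subgroup.mem_normalizer_iff''.1 (hNM n.2) h).1 hh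
  calc m (fun x => f (h • n • x))
      = m (fun x => f (n • ((n : G)⁻¹ * h * n) • x)) := by
        simp only [Subgroup.smul_def, ← mul_smul, mul_assoc, mul_inv_cancel_left]
    _ = m (fun x => f (n • x)) := hM hconj _ (hf.comp (n • ·))

theorem IsAmenable.exists_isMean_le_meanStabilizer {N : Subgroup G} (hN : IsAmenable N)
    {m : (X → ℝ) → ℝ} (hm : IsMean m) :
    ∃ m' : (X → ℝ) → ℝ, IsMean m' ∧ N ≤ meanStabilizer G m' ∧
      ∀ M : Subgroup G, N ≤ Subgroup.normalizer (M : Set G) → M ≤ meanStabilizer G m →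
        M ≤ meanStabilizer G m' := by
  obtain ⟨μ, hμ, hinv⟩ := isAmenable_iff_exists_isMean.1 hN
  have hsub : (meanStabilizer G (meanConvolution μ m)).subgroupOf N = ⊤ :=
    top_le_iff.1 (hinv ▸ meanStabilizer_le_meanStabilizer_meanConvolution μ hm)
  exact ⟨meanConvolution μ m, hμ.convolution hm, Subgroup.subgroupOf_eq_top.1 hsub,
    fun M hNM hM => le_meanStabilizer_meanConvolution_of_le_normalizer hNM μ hM⟩

variable {N : ι → Subgroup G}

theorem exists_isMean_forall_mem_le_meanStabilizer [Nonempty X]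
    (hN : ∀ i j, N i ≤ Subgroup.normalizer (N j : Set G)) (hA : ∀ i, IsAmenable (N i))
    (s : Finset ι) :
    ∃ m : (X → ℝ) → ℝ, IsMean m ∧ ∀ i ∈ s, N i ≤ meanStabilizer G m := by
  classical
  induction s using Finset.induction_on with
  | empty => exact ⟨_, isMean_eval (Classical.arbitrary X), by simp⟩
  | insert i s _ ih =>
    obtain ⟨m, hm, hinv⟩ := ih
    obtain ⟨m', hm', hi, hpres⟩ := (hA i).exists_isMean_le_meanStabilizer hm
    exact ⟨m', hm', (Finset.forall_mem_insert _ _ _).2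
      ⟨hi, fun j hj => hpres (N j) (hN i j) (hinv j hj)⟩⟩

theorem exists_isMean_iSup_le_meanStabilizer [Nonempty X]
    (hN : ∀ i j, N i ≤ Subgroup.normalizer (N j : Set G)) (hA : ∀ i, IsAmenable (N i)) :
    ∃ m : (X → ℝ) → ℝ, IsMean m ∧ ⨆ i, N i ≤ meanStabilizer G m := by
  choose u hu hinv using exists_isMean_forall_mem_le_meanStabilizer (X := X) hN hA
  obtain ⟨m, hm, hlim⟩ := exists_isMean_tendsto (Ultrafilter.of atTop) hu
  refine ⟨m, hm, iSup_le fun i g hg => mem_meanStabilizer_of_tendsto hlim ?_⟩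
  have hmem : ∀ᶠ s : Finset ι in atTop, i ∈ s :=
    (eventually_ge_atTop {i}).mono fun _ => Finset.singleton_subset_iff.1
  exact Ultrafilter.of_le atTop (hmem.mono fun s hs => hinv s i hs hg)

end Action

section Radical

variable {G ι : Type*} [Group G]

theorem isAmenable_of_le_meanStabilizer {H : Subgroup G} {m : (G → ℝ) → ℝ} (hm : IsMean m)
    (hH : H ≤ meanStabilizer G m) : IsAmenable H := by
  obtain ⟨T, hT, -⟩ := H.exists_isComplement_right 1
  let r : G → H := fun g => (hT.equiv g).1
  have hr (h : H) (g : G) : r (h * g) = h * r g := congrArg Prod.fst (hT.equiv_mul_left h g)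
  refine isAmenable_iff_exists_isMean.2 ⟨_, hm.comp r, eq_top_iff.2 fun h _ f hf => ?_⟩
  simpa only [smul_eq_mul, hr] using hH h.2 _ (hf.comp r)

theorem isAmenable_iSup_of_le_normalizer {N : ι → Subgroup G}
    (hN : ∀ i j, N i ≤ Subgroup.normalizer (N j : Set G)) (hA : ∀ i, IsAmenable (N i)) :
    IsAmenable (⨆ i, N i : Subgroup G) :=
  have ⟨_, hm, hinv⟩ := exists_isMean_iSup_le_meanStabilizer (X := G) hN hA
  isAmenable_of_le_meanStabilizer hm hinv

theorem amenableRadical_eq_sSup :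
    amenableRadical G = sSup {N : Subgroup G | N.Normal ∧ IsAmenable N} := by
  apply le_antisymm
  · rw [amenableRadical, Subgroup.closure_le]
    rintro g ⟨N, hN, hA, hg⟩
    refine Subgroup.mem_sSup_of_mem ?_ hg
    exact ⟨hN, hA⟩
  · exact sSup_le fun N ⟨hN, hA⟩ g hg => Subgroup.subset_closure ⟨N, hN, hA, hg⟩

end Radical

/-- Every group has an amenable radical: the subgroup generated by all normal
amenable subgroups is itself normal and amenable, and contains every normal
amenable subgroup — so it is the unique maximal normal amenable subgroup. -/
theorem amenableRadical_spec (G : Type*) [Group G] :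
    (amenableRadical G).Normal ∧ IsAmenable (amenableRadical G) ∧
      ∀ N : Subgroup G, N.Normal → IsAmenable N → N ≤ amenableRadical G := by
  rw [amenableRadical_eq_sSup]
  refine ⟨Subgroup.sSup_normal _ fun N hN => hN.1, ?_, fun N hN hA => le_sSup ⟨hN, hA⟩⟩
  rw [sSup_eq_iSup']
  refine isAmenable_iSup_of_le_normalizer (fun M N => ?_) fun N => N.2.2
  have : N.1.Normal := N.2.1
  exact Subgroup.le_normalizer_of_normal
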